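/- Let σ_n denote the uniform probability measure on the sphere S_n(√n) = {x ∈ ℝ^{n} : ‖x‖ = √n}. Then the pushforward of σ_n under the first-coordinate projection x ↦ x₁ converges weakly (in distribution) to the standard Gaussian measure N(0,1) on ℝ as n → ∞. -/

import Mathlib

open Filter MeasureTheory ProbabilityTheory


theorem aux_rot {n : ℕ} (σ : Measure (EuclideanSpace ℝ (Fin (n + 1))))
    (hinv : ∀ T : (EuclideanSpace ℝ (Fin (n + 1))) ≃ₗᵢ[ℝ] (EuclideanSpace ℝ (Fin (n + 1))), σ.map T = σ) (g : EuclideanSpace ℝ (Fin (n + 1))) :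
    ∫ x, Complex.exp (Complex.I * ((inner ℝ x g : ℝ) : ℂ)) ∂σ =
      ∫ x, Complex.exp (Complex.I * ((‖g‖ * x 0 : ℝ) : ℂ)) ∂σ := by
  set v : EuclideanSpace ℝ (Fin (n + 1)) := EuclideanSpace.single 0 ‖g‖ with hv
  have hvn : ‖v‖ = ‖g‖ := by simp [hv]
  let T := (Submodule.span ℝ {v - g})ᗮ.reflection
  have hT : T v = g := Submodule.reflection_sub hvn
  conv_lhs => rw [← hinv T]
  rw [integral_map (by fun_prop) (by fun_prop)]
  congr 1 with x
  rw [← hT, T.inner_map_map]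
  simp [hv, mul_comm, EuclideanSpace.inner_single_right]

theorem aux_gauss {n : ℕ} (x : EuclideanSpace ℝ (Fin (n + 1))) (s : ℝ) :
    ∫ g, Complex.exp (Complex.I * ((inner ℝ x (s • WithLp.toLp 2 g) : ℝ) : ℂ))
      ∂(Measure.pi (fun _ : Fin (n+1) => gaussianReal 0 1)) =
      Complex.exp (-(s ^ 2 * ‖x‖ ^ 2 / 2 : ℝ)) := by
  have h1 : ∀ g : Fin (n+1) → ℝ,
      Complex.exp (Complex.I * ((inner ℝ x (s • WithLp.toLp 2 g) : ℝ) : ℂ)) =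
      ∏ i, Complex.exp (((s * x i : ℝ) : ℂ) * (g i : ℂ) * Complex.I) := by
    intro g
    rw [← Complex.exp_sum]
    congr 1
    simp only [PiLp.inner_apply, Complex.ofReal_sum, Finset.mul_sum]
    refine Finset.sum_congr rfl fun i _ => ?_
    simp
    ring
  simp_rw [h1]
  rw [integral_fintype_prod_eq_prod
    (f := fun i (y : ℝ) => Complex.exp (((s * x i : ℝ) : ℂ) * (y : ℂ) * Complex.I))]
  have h2 : ∀ i, ∫ y, Complex.exp (((s * x i : ℝ) : ℂ) * (y : ℂ) * Complex.I) ∂(gaussianReal 0 1)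
      = Complex.exp (-(s ^ 2 * (x i) ^ 2 / 2 : ℝ)) := by
    intro i
    rw [← charFun_apply_real, charFun_gaussianReal]
    congr 1
    push_cast
    simp
    ring
  simp_rw [h2]
  rw [← Complex.exp_sum, EuclideanSpace.real_norm_sq_eq]
  congr 1
  push_cast
  rw [Finset.sum_neg_distrib, Finset.mul_sum, Finset.sum_div]

theorem aux_sq {n : ℕ} (σ : Measure (EuclideanSpace ℝ (Fin (n + 1)))) [IsProbabilityMeasure σ]
    (hsupp : ∀ᵐ x ∂σ, ‖x‖ ^ 2 = (n + 1 : ℝ))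
    (hinv : ∀ T : (EuclideanSpace ℝ (Fin (n + 1))) ≃ₗᵢ[ℝ] (EuclideanSpace ℝ (Fin (n + 1))), σ.map T = σ) :
    Integrable (fun x => x 0 ^ 2) σ ∧ ∫ x, x 0 ^ 2 ∂σ = 1 := by
  have hI : ∀ i, Integrable (fun x : EuclideanSpace ℝ (Fin (n + 1)) => x i ^ 2) σ := by
    intro i
    refine Integrable.mono' (integrable_const (n + 1 : ℝ)) (by fun_prop) ?_
    filter_upwards [hsupp] with x hx
    rw [← hx, EuclideanSpace.real_norm_sq_eq, Real.norm_eq_abs, abs_of_nonneg (sq_nonneg _)]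
    exact Finset.single_le_sum (f := fun j => x j ^ 2) (fun j _ => sq_nonneg _) (Finset.mem_univ i)
  refine ⟨hI 0, ?_⟩
  have heq : ∀ i, ∫ x, x i ^ 2 ∂σ = ∫ x, x 0 ^ 2 ∂σ := by
    intro i
    let T : (EuclideanSpace ℝ (Fin (n + 1))) ≃ₗᵢ[ℝ] (EuclideanSpace ℝ (Fin (n + 1))) := LinearIsometryEquiv.piLpCongrLeft 2 ℝ ℝ (Equiv.swap 0 i)
    conv_lhs => rw [← hinv T]
    rw [integral_map (by fun_prop) (by fun_prop)]
    simp [T, LinearIsometryEquiv.piLpCongrLeft_apply, Equiv.piCongrLeft'_apply]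
  have hs : ∫ x, ∑ i, x i ^ 2 ∂σ = (n + 1 : ℝ) := by
    rw [show (n + 1 : ℝ) = ∫ x, (n + 1 : ℝ) ∂σ by simp]
    refine integral_congr_ae ?_
    filter_upwards [hsupp] with x hx
    rw [← hx, EuclideanSpace.real_norm_sq_eq]
  rw [integral_finsetSum _ (fun i _ => hI i)] at hs
  simp_rw [heq] at hs
  simp at hs
  have : (n + 1 : ℝ) ≠ 0 := by positivity
  exact mul_left_cancel₀ this (by rw [hs, mul_one])

theorem aux_exp (a b : ℝ) :
    ‖Complex.exp (Complex.I * (a : ℂ)) - Complex.exp (Complex.I * (b : ℂ))‖ ≤ |a - b| := by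
  have : Complex.exp (Complex.I * (a : ℂ)) - Complex.exp (Complex.I * (b : ℂ)) =
      Complex.exp (Complex.I * (b : ℂ)) * (Complex.exp (Complex.I * ((a - b : ℝ) : ℂ)) - 1) := by
    rw [mul_sub, ← Complex.exp_add]
    push_cast
    ring_nf
  rw [this, norm_mul, mul_comm Complex.I (b : ℂ), Complex.norm_exp_ofReal_mul_I, one_mul]
  exact Real.norm_exp_I_mul_ofReal_sub_one_le

theorem aux_int {α : Type*} [MeasurableSpace α] (μ : Measure α) [IsFiniteMeasure μ]
    (f : α → ℝ) (hf : Measurable f) :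
    Integrable (fun x => Complex.exp (Complex.I * (f x : ℂ))) μ := by
  refine Integrable.mono' (integrable_const (1 : ℝ)) (by fun_prop) ?_
  refine ae_of_all _ fun x => ?_
  rw [mul_comm, Complex.norm_exp_ofReal_mul_I]

theorem aux_lip {n : ℕ} (σ : Measure (EuclideanSpace ℝ (Fin (n + 1)))) [IsProbabilityMeasure σ]
    (hsupp : ∀ᵐ x ∂σ, ‖x‖ ^ 2 = (n + 1 : ℝ))
    (hinv : ∀ T : (EuclideanSpace ℝ (Fin (n + 1))) ≃ₗᵢ[ℝ] (EuclideanSpace ℝ (Fin (n + 1))), σ.map T = σ) (a b : ℝ) :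
    ‖(∫ x, Complex.exp (Complex.I * ((a * x 0 : ℝ) : ℂ)) ∂σ) -
      ∫ x, Complex.exp (Complex.I * ((b * x 0 : ℝ) : ℂ)) ∂σ‖ ≤ |a - b| := by
  obtain ⟨hI, h1⟩ := aux_sq σ hsupp hinv
  rw [← integral_sub (aux_int _ _ (by fun_prop)) (aux_int _ _ (by fun_prop))]
  refine (norm_integral_le_of_norm_le (g := fun x => |a - b| * ((1 + x 0 ^ 2) / 2)) ?_ ?_).trans ?_
  · exact (((integrable_const 1).add hI).div_const 2).const_mul _
  · refine ae_of_all _ fun x => (aux_exp _ _).trans ?_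
    rw [← sub_mul, abs_mul]
    gcongr
    nlinarith [sq_nonneg (|x 0| - 1), sq_abs (x 0)]
  · rw [integral_const_mul, integral_div, integral_add (integrable_const 1) hI, h1]
    simp

theorem aux_conc : ∃ c : ℝ, ∀ n : ℕ, 
    Integrable (fun g : Fin (n + 1) → ℝ => (‖(WithLp.toLp 2 g : EuclideanSpace ℝ (Fin (n + 1)))‖ ^ 2 - (n + 1)) ^ 2)
      (Measure.pi (fun _ : Fin (n+1) => gaussianReal 0 1)) ∧
    ∫ g : Fin (n + 1) → ℝ, (‖(WithLp.toLp 2 g : EuclideanSpace ℝ (Fin (n + 1)))‖ ^ 2 - (n + 1)) ^ 2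
      ∂(Measure.pi (fun _ : Fin (n+1) => gaussianReal 0 1)) = (n + 1) * c := by
  refine ⟨Var[fun y => y ^ 2; gaussianReal 0 1], fun n => ?_⟩
  have hL : MemLp (fun y : ℝ => y ^ 2) 2 (gaussianReal 0 1) := by
    have h4 := memLp_id_gaussianReal' (μ := 0) (v := 1) 4 (by simp)
    rw [memLp_two_iff_integrable_sq (by fun_prop)]
    have := h4.integrable_norm_pow (p := 4) (by simp)
    refine this.congr (ae_of_all _ fun x => ?_)
    simp only [id, Real.norm_eq_abs]
    rw [← pow_mul]
    exact Even.pow_abs (by decide) x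
  set P := Measure.pi (fun _ : Fin (n+1) => gaussianReal 0 1) with hP
  have hLi : ∀ i, MemLp (fun g : Fin (n+1) → ℝ => g i ^ 2) 2 P := fun i =>
    hL.comp_measurePreserving (measurePreserving_eval (fun _ : Fin (n+1) => gaussianReal 0 1) i)
  have hm : ∫ y, y ^ 2 ∂(gaussianReal 0 1) = 1 := by
    have h := variance_id_gaussianReal (μ := 0) (v := 1)
    rw [variance_of_integral_eq_zero (by fun_prop) (by simp)] at h
    simpa using h
  have hmi : ∀ i, ∫ g : Fin (n+1) → ℝ, g i ^ 2 ∂P = 1 := fun i => by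
    rw [← hm, ← (measurePreserving_eval (fun _ : Fin (n+1) => gaussianReal 0 1) i).map_eq,
      integral_map (measurable_pi_apply i).aemeasurable (by fun_prop)]
  have hS : MemLp (fun g : Fin (n+1) → ℝ => ∑ i, g i ^ 2) 2 P := memLp_finsetSum _ fun i _ => hLi i
  have hmean : ∫ g : Fin (n+1) → ℝ, ∑ i, g i ^ 2 ∂P = n + 1 := by
    rw [integral_finsetSum _ fun i _ => (hLi i).integrable (by norm_num)]
    simp [hmi]
  have hvar := variance_sum_pi (μ := fun _ : Fin (n+1) => gaussianReal 0 1)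
    (X := fun _ y => y ^ 2) (fun _ => hL)
  simp_rw [EuclideanSpace.real_norm_sq_eq]
  constructor
  · exact (hS.sub (memLp_const (n + 1 : ℝ))).integrable_sq
  · rw [variance_eq_integral (by fun_prop)] at hvar
    simp only [Finset.sum_apply] at hvar
    rw [← hP, hmean] at hvar
    simpa using hvar

theorem aux_main {n : ℕ} (σ : Measure (EuclideanSpace ℝ (Fin (n + 1)))) [IsProbabilityMeasure σ]
    (hsupp : ∀ᵐ x ∂σ, ‖x‖ ^ 2 = (n + 1 : ℝ))
    (hinv : ∀ T : (EuclideanSpace ℝ (Fin (n + 1))) ≃ₗᵢ[ℝ] (EuclideanSpace ℝ (Fin (n + 1))), σ.map T = σ) (s : ℝ) :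
    ∫ g : Fin (n + 1) → ℝ, (∫ x, Complex.exp (Complex.I *
      ((‖s • (WithLp.toLp 2 g : EuclideanSpace ℝ (Fin (n + 1)))‖ * x 0 : ℝ) : ℂ)) ∂σ)
      ∂(Measure.pi (fun _ : Fin (n+1) => gaussianReal 0 1))
      = Complex.exp (-(s ^ 2 * (n + 1) / 2 : ℝ)) := by
  simp_rw [← aux_rot σ hinv]
  rw [integral_integral_swap]
  · simp_rw [aux_gauss]
    rw [integral_congr_ae (g := fun _ => Complex.exp (-(s ^ 2 * (n + 1) / 2 : ℝ)))]
    · simp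
    · filter_upwards [hsupp] with x hx
      rw [hx]
  · exact aux_int _ (fun p : (Fin (n + 1) → ℝ) × (EuclideanSpace ℝ (Fin (n + 1))) => inner ℝ p.2 (s • WithLp.toLp 2 p.1))
      (by fun_prop)

theorem aux_bound {n : ℕ} (c : ℝ) (σ : Measure (EuclideanSpace ℝ (Fin (n + 1)))) [IsProbabilityMeasure σ]
    (hsupp : ∀ᵐ x ∂σ, ‖x‖ ^ 2 = (n + 1 : ℝ))
    (hinv : ∀ T : (EuclideanSpace ℝ (Fin (n + 1))) ≃ₗᵢ[ℝ] (EuclideanSpace ℝ (Fin (n + 1))), σ.map T = σ)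
    (hc : Integrable (fun g : Fin (n + 1) → ℝ => (‖(WithLp.toLp 2 g : EuclideanSpace ℝ (Fin (n + 1)))‖ ^ 2 - (n + 1)) ^ 2)
      (Measure.pi (fun _ : Fin (n+1) => gaussianReal 0 1)) ∧
    ∫ g : Fin (n + 1) → ℝ, (‖(WithLp.toLp 2 g : EuclideanSpace ℝ (Fin (n + 1)))‖ ^ 2 - (n + 1)) ^ 2
      ∂(Measure.pi (fun _ : Fin (n+1) => gaussianReal 0 1)) = (n + 1) * c) (t : ℝ) :
    ‖(∫ x, Complex.exp (Complex.I * ((t * x 0 : ℝ) : ℂ)) ∂σ) - Complex.exp (-(t ^ 2 / 2 : ℝ))‖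
      ≤ |t| * ((1 + c) / 2) / √(n + 1) := by
  obtain ⟨hI, hv⟩ := hc
  set P := Measure.pi (fun _ : Fin (n+1) => gaussianReal 0 1) with hP
  set r : ℝ := √(n + 1) with hr
  have hr2 : r ^ 2 = n + 1 := Real.sq_sqrt (by positivity)
  have hr0 : 0 < r := Real.sqrt_pos.2 (by positivity)
  -- the real-variable version with |t|
  have key : ∀ u : ℝ, 0 ≤ u → ‖(∫ x, Complex.exp (Complex.I * ((u * x 0 : ℝ) : ℂ)) ∂σ) -
      Complex.exp (-(u ^ 2 / 2 : ℝ))‖ ≤ u * ((1 + c) / 2) / r := by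
    intro u hu
    have hm := aux_main σ hsupp hinv (u / r)
    have e1 : (u / r) ^ 2 * (n + 1) / 2 = u ^ 2 / 2 := by
      rw [← hr2]; field_simp
    rw [e1] at hm
    have hcont : Continuous (fun a : ℝ => ∫ x, Complex.exp (Complex.I * ((a * x 0 : ℝ) : ℂ)) ∂σ) := by
      refine (LipschitzWith.of_dist_le_mul (K := 1) fun a b => ?_).continuous
      rw [dist_eq_norm, Real.dist_eq]
      simpa using aux_lip σ hsupp hinv a b
    have hint : Integrable (fun g : Fin (n + 1) → ℝ => (∫ x, Complex.exp (Complex.I *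
      ((‖(u / r) • (WithLp.toLp 2 g : EuclideanSpace ℝ (Fin (n + 1)))‖ * x 0 : ℝ) : ℂ)) ∂σ)) P := by
      refine Integrable.mono' (integrable_const (1 : ℝ)) ?_ ?_
      · exact (hcont.comp (by fun_prop)).aestronglyMeasurable
      · refine ae_of_all _ fun g => ?_
        refine (norm_integral_le_of_norm_le_const (C := 1) (ae_of_all _ fun x => ?_)).trans ?_
        · rw [mul_comm, Complex.norm_exp_ofReal_mul_I]
        · simp
    have e2 : (∫ x, Complex.exp (Complex.I * ((u * x 0 : ℝ) : ℂ)) ∂σ) =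
      ∫ g : Fin (n + 1) → ℝ, (∫ x, Complex.exp (Complex.I * ((u * x 0 : ℝ) : ℂ)) ∂σ) ∂P := by simp
    rw [e2, ← hm, ← integral_sub (integrable_const _) hint]
    refine (norm_integral_le_of_norm_le (g := fun g : Fin (n + 1) → ℝ =>
      u * ((1 + (‖(WithLp.toLp 2 g : EuclideanSpace ℝ (Fin (n + 1)))‖ ^ 2 - (n + 1)) ^ 2 / (n + 1)) / 2) / r) ?_ ?_).trans ?_
    · exact ((((integrable_const 1).add (hI.div_const _)).div_const 2).const_mul _).div_const _
    · refine ae_of_all _ fun g => (aux_lip σ hsupp hinv _ _).trans ?_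
      set a := ‖(WithLp.toLp 2 g : EuclideanSpace ℝ (Fin (n + 1)))‖ with ha
      have ha0 : 0 ≤ a := norm_nonneg _
      rw [norm_smul, ← ha, Real.norm_of_nonneg (by positivity), ← hr2,
        show u - u / r * a = u * (r - a) / r by field_simp, abs_div, abs_mul, abs_of_nonneg hu,
        abs_of_pos hr0]
      gcongr
      have h3 : |r - a| * r ≤ |a ^ 2 - r ^ 2| := by
        rw [show a ^ 2 - r ^ 2 = - ((r - a) * (a + r)) by ring, abs_neg, abs_mul,
          abs_of_pos (show 0 < a + r by positivity)]
        gcongr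
        linarith
      have h4 : |r - a| ≤ |a ^ 2 - r ^ 2| / r := by rwa [le_div_iff₀ hr0]
      have h5 : (a ^ 2 - r ^ 2) ^ 2 / r ^ 2 = (|a ^ 2 - r ^ 2| / r) ^ 2 := by
        rw [div_pow, sq_abs]
      rw [h5]
      nlinarith [sq_nonneg (|a ^ 2 - r ^ 2| / r - 1)]
    · rw [integral_div, integral_const_mul, integral_div,
        integral_add (integrable_const 1) (hI.div_const _), integral_div, hv]
      rw [mul_div_cancel_left₀ _ (by positivity)]
      simp
  rcases le_total 0 t with ht | ht
  · rw [abs_of_nonneg ht]; exact key t ht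
  · have := key (-t) (by linarith)
    rw [abs_of_nonpos ht]
    have e3 : (∫ x, Complex.exp (Complex.I * ((-t * x 0 : ℝ) : ℂ)) ∂σ) =
        ∫ x, Complex.exp (Complex.I * ((t * x 0 : ℝ) : ℂ)) ∂σ := by
      conv_rhs => rw [← hinv (LinearIsometryEquiv.neg ℝ)]
      rw [integral_map (by fun_prop) (by fun_prop)]
      simp
    rwa [e3, neg_sq] at this

/-- Poincaré's lemma (Mehler, Borel): if `σ_n` is the uniform probability measure on the
sphere of radius `√n` in `ℝ^n` (the normalized rotation-invariant measure, characterized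
as a probability measure carried by the sphere and invariant under every linear isometry),
then the pushforward of `σ_n` under the first coordinate `x ↦ x₁` converges weakly to the
standard Gaussian `N(0,1)`: integrals of every bounded continuous function converge. -/
theorem stmt_3
    (σ : ∀ n : ℕ, Measure (EuclideanSpace ℝ (Fin (n + 1))))
    (hprob : ∀ n, IsProbabilityMeasure (σ n))
    (hsupp : ∀ n, σ n (Metric.sphere (0 : EuclideanSpace ℝ (Fin (n + 1)))
      (Real.sqrt (n + 1))) = 1)
    (hinv : ∀ n (T : EuclideanSpace ℝ (Fin (n + 1)) ≃ₗᵢ[ℝ] EuclideanSpace ℝ (Fin (n + 1))),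
      (σ n).map T = σ n) :
    ∀ f : BoundedContinuousFunction ℝ ℝ,
      Tendsto (fun n : ℕ => ∫ x, f (x 0) ∂(σ n)) atTop
        (nhds (∫ y, f y ∂(gaussianReal 0 1))) := by
  have hs : ∀ n : ℕ, ∀ᵐ x ∂(σ n), ‖x‖ ^ 2 = (n + 1 : ℝ) := by
    intro n
    have h := (prob_compl_eq_zero_iff (μ := σ n) Metric.isClosed_sphere.measurableSet).2 (hsupp n)
    filter_upwards [compl_mem_ae_iff.2 h] with x hx
    rw [compl_compl, mem_sphere_zero_iff_norm] at hx
    rw [hx, Real.sq_sqrt (by positivity)]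
  obtain ⟨c, hc⟩ := aux_conc
  have hmeas : ∀ n, Measurable (fun x : EuclideanSpace ℝ (Fin (n + 1)) => x 0) :=
    fun n => by fun_prop
  let μ : ℕ → ProbabilityMeasure ℝ := fun n =>
    ⟨(σ n).map (fun x => x 0), Measure.isProbabilityMeasure_map (hmeas n).aemeasurable⟩
  let μ₀ : ProbabilityMeasure ℝ := ⟨gaussianReal 0 1, inferInstance⟩
  have hμ : Tendsto μ atTop (nhds μ₀) := by
    refine ProbabilityMeasure.tendsto_of_tendsto_charFun fun t => ?_
    rw [tendsto_iff_norm_sub_tendsto_zero]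
    have h0 : charFun (μ₀ : Measure ℝ) t = Complex.exp (-(t ^ 2 / 2 : ℝ)) := by
      change charFun (gaussianReal 0 1) t = _
      rw [charFun_gaussianReal]
      congr 1
      push_cast
      simp
    have hn : ∀ n, charFun (μ n : Measure ℝ) t =
        ∫ x, Complex.exp (Complex.I * ((t * x 0 : ℝ) : ℂ)) ∂(σ n) := by
      intro n
      change charFun ((σ n).map (fun x => x 0)) t = _
      rw [charFun_apply_real, integral_map (hmeas n).aemeasurable (by fun_prop)]
      congr 1 with x
      push_cast
      ring_nf
    simp_rw [h0, hn]
    refine squeeze_zero (fun _ => norm_nonneg _)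
      (fun n => aux_bound c (σ n) (hs n) (hinv n) (hc n) t) ?_
    refine Tendsto.const_div_atTop ?_ _
    exact Real.tendsto_sqrt_atTop.comp
      (tendsto_atTop_add_const_right _ _ tendsto_natCast_atTop_atTop)
  intro f
  have := ProbabilityMeasure.tendsto_iff_forall_integral_tendsto.1 hμ f
  refine this.congr fun n => ?_
  change ∫ y, f y ∂((σ n).map (fun x => x 0)) = _
  exact integral_map (hmeas n).aemeasurable f.continuous.aestronglyMeasurable
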